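/- arXiv:2304.11600 — 4 statements merged into one kernel-verified Lean document; each statement's English description precedes it below -/
import Mathlib

section
/- Let b, c ∈ ℝ with b ≠ 0, let u_nom ∈ ℝ, and set Φ = c + b·u_nom. Define u_rob = u_nom if Φ ≥ 0, and u_rob = u_nom − Φ/b if Φ < 0. Then c + b·u_rob ≥ 0, and for every u ∈ ℝ with c + b·u ≥ 0 one has |u_rob − u_nom| ≤ |u − u_nom|. -/
/-- Scalar-input closed-form solution of the environmentally robust CBF-QP:
`urob` is feasible and minimally modifies `unom`. -/
theorem er_cbf_qp_scalar_closed_form (b c : ℝ) (hb : b ≠ 0) (unom : ℝ)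
    (Φ : ℝ) (hΦ : Φ = c + b * unom)
    (urob : ℝ) (hurob : urob = if 0 ≤ Φ then unom else unom - Φ / b) :
    c + b * urob ≥ 0 ∧
      ∀ u : ℝ, c + b * u ≥ 0 → |urob - unom| ≤ |u - unom| := by
  by_cases h : 0 ≤ Φ
  · rw [if_pos h] at hurob
    subst hurob
    refine ⟨hΦ ▸ h, fun u _ => ?_⟩
    simp
  · rw [if_neg h] at hurob
    have hneg : Φ < 0 := not_le.mp h
    have hcancel : b * (Φ / b) = Φ := mul_div_cancel₀ Φ hb
    subst hurob
    refine ⟨?_, fun u hu => ?_⟩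
    -- The correction `-Φ / b` makes the constraint active.
    · have : c + b * (unom - Φ / b) = 0 := by linear_combination -hcancel - hΦ
      exact this.ge
    -- Feasibility of `u` says `-Φ ≤ b * (u - unom)`, so `|Φ| ≤ |u - unom| * |b|`.
    · have hdiff : unom - Φ / b - unom = -(Φ / b) := by ring
      rw [hdiff, abs_neg, abs_div, div_le_iff₀ (abs_pos.mpr hb), ← abs_mul, abs_of_neg hneg]
      refine le_trans ?_ (le_abs_self _)
      linarith
end

section
/- Let n, m ≥ 1, ν ≥ 0, let h : ℝⁿ × ℝ → ℝ be differentiable, let f : ℝⁿ → ℝⁿ and g : ℝⁿ → ℝⁿˣᵐ (continuous linear maps from ℝ^m to ℝⁿ) be given, and let u : ℝ → ℝ^m. Suppose x : ℝ → ℝⁿ is differentiable with x'(t) = f(x(t)) + g(x(t))(u(t)) for all t ≥ 0, and suppose that for all t ≥ 0 the CBF condition ∂h/∂t(x(t), t) + ⟨∇_x h(x(t), t), f(x(t)) + g(x(t))(u(t))⟩ + ν·h(x(t), t) ≥ 0 holds, where ∇_x h denotes the gradient of h in its first argument and ∂h/∂t the partial derivative in its second argument. If h(x(0), 0) ≥ 0,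 then h(x(t), t) ≥ 0 for all t ≥ 0. -/
/-!
Along the trajectory put `φ t = h (x t) t`. By the chain rule `φ'` is the sum of the partial
derivative of `h` in time and the inner product of its spatial gradient with `x'`
(`hasDerivAt_along`), so the CBF condition reads `φ' + ν φ ≥ 0` on `[0, ∞)`. Hence `exp (ν t) φ t`
has nonnegative derivative, `exp (ν t) φ t ≥ φ 0 ≥ 0`, and the exponential is positive
(`nonneg_of_linear_diff_ineq`).
-/

open scoped RealInnerProductSpace

/-- Chain rule for a time-varying function along a curve, with the joint derivative split into
the partial time derivative and the spatial gradient. -/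
lemma hasDerivAt_along {E : Type*} [NormedAddCommGroup E] [InnerProductSpace ℝ E] [CompleteSpace E]
    {h : E → ℝ → ℝ} {x : ℝ → E} {v : E} {t : ℝ}
    (hd : DifferentiableAt ℝ (fun q : E × ℝ => h q.1 q.2) (x t, t)) (hx : HasDerivAt x v t) :
    HasDerivAt (fun s => h (x s) s)
      (deriv (fun s => h (x t) s) t + ⟪gradient (fun y => h y t) (x t), v⟫) t := by
  have hL := hd.hasFDerivAt
  set L := fderiv ℝ (fun q : E × ℝ => h q.1 q.2) (x t, t)
  have htime : HasDerivAt (fun s => h (x t) s) (L (0, 1)) t :=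
    hL.comp_hasDerivAt t ((hasDerivAt_const t (x t)).prodMk (hasDerivAt_id t))
  have hspace : HasFDerivAt (fun y => h y t) (L.comp (ContinuousLinearMap.inl ℝ E ℝ)) (x t) :=
    HasFDerivAt.comp (g := fun q : E × ℝ => h q.1 q.2) (f := fun y => (y, t)) (x t) hL
      (hasFDerivAt_prodMk_left (x t) t)
  have hcurve : HasDerivAt (fun s => h (x s) s) (L (v, 1)) t :=
    HasFDerivAt.comp_hasDerivAt (f := fun s => (x s, s)) t hL (hx.prodMk (hasDerivAt_id t))
  have hsplit : L (v, 1) = L (0, 1) + L (v, 0) := by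
    rw [← map_add]; simp
  rw [htime.deriv, gradient, InnerProductSpace.toDual_symm_apply, hspace.fderiv]
  simpa [hsplit] using hcurve

/-- Comparison principle for `φ' + ν φ ≥ 0`, by means of the integrating factor `exp (ν t)`. -/
lemma nonneg_of_linear_diff_ineq {φ φ' : ℝ → ℝ} {ν : ℝ}
    (hφ : ∀ t, 0 ≤ t → HasDerivAt φ (φ' t) t) (hineq : ∀ t, 0 ≤ t → 0 ≤ φ' t + ν * φ t)
    (h0 : 0 ≤ φ 0) {t : ℝ} (ht : 0 ≤ t) : 0 ≤ φ t := by
  have hder : ∀ s, 0 ≤ s → HasDerivAt (fun s => Real.exp (ν * s) * φ s)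
      (Real.exp (ν * s) * (φ' s + ν * φ s)) s := by
    intro s hs
    have he : HasDerivAt (fun s => Real.exp (ν * s)) (Real.exp (ν * s) * ν) s := by
      simpa using ((hasDerivAt_id s).const_mul ν).exp
    exact (he.mul (hφ s hs)).congr_deriv (by ring)
  have hmono : MonotoneOn (fun s => Real.exp (ν * s) * φ s) (Set.Ici 0) := by
    refine monotoneOn_of_hasDerivWithinAt_nonneg (convex_Ici 0)
      (fun s hs => (hder s hs).continuousAt.continuousWithinAt)
      (fun s hs => (hder s (interior_subset hs)).hasDerivWithinAt) (fun s hs => ?_)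
    exact mul_nonneg (Real.exp_pos _).le (hineq s (interior_subset hs))
  have hle : φ 0 ≤ Real.exp (ν * t) * φ t := by
    simpa using hmono Set.self_mem_Ici ht ht
  exact nonneg_of_mul_nonneg_right (h0.trans hle) (Real.exp_pos _)

/-- Theorem 1 of the paper with α(r) = ν r: a time-varying CBF whose constraint holds
along a closed-loop trajectory of `ẋ = f(x) + g(x)u` renders `{h ≥ 0}` forward invariant. -/
theorem cbf_forward_invariance (n m : ℕ) (hn : 1 ≤ n) (hm : 1 ≤ m)
    (ν : ℝ) (hν : 0 ≤ ν)
    (h : EuclideanSpace ℝ (Fin n) → ℝ → ℝ)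
    (hdiff : Differentiable ℝ (fun q : EuclideanSpace ℝ (Fin n) × ℝ => h q.1 q.2))
    (f : EuclideanSpace ℝ (Fin n) → EuclideanSpace ℝ (Fin n))
    (g : EuclideanSpace ℝ (Fin n) → (EuclideanSpace ℝ (Fin m) →L[ℝ] EuclideanSpace ℝ (Fin n)))
    (u : ℝ → EuclideanSpace ℝ (Fin m))
    (x : ℝ → EuclideanSpace ℝ (Fin n)) (hx : Differentiable ℝ x)
    (hdyn : ∀ t, 0 ≤ t → deriv x t = f (x t) + g (x t) (u t))
    (hcbf : ∀ t, 0 ≤ t →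
      deriv (fun s => h (x t) s) t
        + ⟪gradient (fun y => h y t) (x t), f (x t) + g (x t) (u t)⟫
        + ν * h (x t) t ≥ 0)
    (h0 : h (x 0) 0 ≥ 0) :
    ∀ t, 0 ≤ t → h (x t) t ≥ 0 := by
  intro t ht
  refine nonneg_of_linear_diff_ineq (φ := fun s => h (x s) s) (fun s hs => ?_) hcbf h0 ht
  exact hasDerivAt_along (hdiff _) (hdyn s hs ▸ (hx s).hasDerivAt)
end

section
/- Let n, p, m ≥ 1 and ν ≥ 0. Let h : ℝⁿ × ℝᵖ → ℝ be differentiable, with D₁h and D₂h its (Fréchet) partial derivatives in the first and second arguments. Let f : ℝⁿ → ℝⁿ, g : ℝⁿ → ℝⁿˣᵐ (continuous linear maps ℝ^m → ℝⁿ), u : ℝ → ℝ^m, and let x : ℝ → ℝⁿ, x_s : ℝ → ℝᵖ, x̂_s : ℝ → ℝᵖ be differentiable with x'(t) = f(x(t)) + g(x(t))(u(t)) for all t ≥ 0. Write w(t) = f(x(t)) + g(x(t))(u(t)). Suppose there are functions ε_h, ε_t : ℝ → ℝ and ε_∇ : ℝ → ℝ with ε_∇(t) ≥ 0 such that for all t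 ≥ 0: (i) h(x(t), x_s(t)) − h(x(t), x̂_s(t)) ≥ ε_h(t); (ii) D₂h(x(t), x_s(t))(x_s'(t)) − D₂h(x(t), x̂_s(t))(x̂_s'(t)) ≥ ε_t(t); (iii) ‖D₁h(x(t), x_s(t)) − D₁h(x(t), x̂_s(t))‖ ≤ ε_∇(t) (operator norm). If for all t ≥ 0 the environmentally robust CBF constraint D₂h(x(t), x̂_s(t))(x̂_s'(t)) + D₁h(x(t), x̂_s(t))(w(t)) + ν·h(x(t), x̂_s(t)) − ε_∇(t)·‖w(t)‖ + ε_t(t) + ν·ε_h(t) ≥ 0 holds, and h(x(0), x_s(0)) ≥ 0, then h(x(t), x_s(t)) ≥ 0 for all t ≥ 0. -/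
/-!
Along the trajectory put `r t = h (x t) (xs t)`. The chain rule gives
`r' = D₂h(x, xs) xs' + D₁h(x, xs) w` with `w = f(x) + g(x) u`. Replacing `xs` by the measurement
`xhs` costs at most `εt` in the first term, `εgrad * ‖w‖` in the second (operator norm), and
`ν * εh` in `ν * r` (here `0 ≤ ν` is used), so the robust constraint yields `r' + ν r ≥ 0`.
By `nonneg_of_deriv_add_mul_nonneg` (comparison with the solution of `y' = -ν y`), `r` then stays
nonnegative. Continuity of `r'` is not needed.
-/

/-- Linear comparison principle: `exp (ν t) * r t` has derivative `exp (ν t) * (r' + ν r) ≥ 0`,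
so it is nondecreasing on `[0, ∞)`. -/
theorem nonneg_of_deriv_add_mul_nonneg {r r' : ℝ → ℝ} {ν : ℝ}
    (hr : ∀ t, HasDerivAt r (r' t) t) (hineq : ∀ t, 0 ≤ t → 0 ≤ r' t + ν * r t)
    (h0 : 0 ≤ r 0) {t : ℝ} (ht : 0 ≤ t) : 0 ≤ r t := by
  have hd : ∀ s, HasDerivAt (fun s => Real.exp (ν * s) * r s)
      (Real.exp (ν * s) * (r' s + ν * r s)) s := fun s => by
    have he : HasDerivAt (fun s : ℝ => Real.exp (ν * s)) (Real.exp (ν * s) * (ν * 1)) s :=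
      ((hasDerivAt_id s).const_mul ν).exp
    exact (he.mul (hr s)).congr_deriv (by ring)
  have hmono : MonotoneOn (fun s => Real.exp (ν * s) * r s) (Set.Ici 0) := by
    refine monotoneOn_of_deriv_nonneg (convex_Ici 0)
      (fun s _ => (hd s).continuousAt.continuousWithinAt)
      (fun s _ => (hd s).differentiableAt.differentiableWithinAt) fun s hs => ?_
    rw [interior_Ici] at hs
    rw [(hd s).deriv]
    exact mul_nonneg (Real.exp_pos _).le (hineq s (le_of_lt hs))
  have hle := hmono Set.self_mem_Ici ht ht
  simp only [mul_zero, Real.exp_zero, one_mul] at hle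
  exact nonneg_of_mul_nonneg_right (h0.trans hle) (Real.exp_pos _)

/-- Chain rule along a curve, in terms of the partial derivatives of a function that is
differentiable jointly in its two arguments. -/
theorem hasDerivAt_comp_two {E F : Type*} [NormedAddCommGroup E] [NormedSpace ℝ E]
    [NormedAddCommGroup F] [NormedSpace ℝ F] {h : E → F → ℝ}
    (hdiff : Differentiable ℝ (fun q : E × F => h q.1 q.2)) {x : ℝ → E} {y : ℝ → F} {t : ℝ}
    (hx : DifferentiableAt ℝ x t) (hy : DifferentiableAt ℝ y t) :
    HasDerivAt (fun s => h (x s) (y s))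
      (fderiv ℝ (fun a => h a (y t)) (x t) (deriv x t)
        + fderiv ℝ (fun b => h (x t) b) (y t) (deriv y t)) t := by
  have hH := (hdiff (x t, y t)).hasFDerivAt
  have h1 : HasFDerivAt (fun a => h a (y t))
      ((fderiv ℝ (fun q : E × F => h q.1 q.2) (x t, y t)).comp (.inl ℝ E F)) (x t) :=
    HasFDerivAt.comp (g := fun q : E × F => h q.1 q.2) (x t) hH (hasFDerivAt_prodMk_left (𝕜 := ℝ) (x t) (y t))
  have h2 : HasFDerivAt (fun b => h (x t) b)
      ((fderiv ℝ (fun q : E × F => h q.1 q.2) (x t, y t)).comp (.inr ℝ E F)) (y t) :=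
    HasFDerivAt.comp (g := fun q : E × F => h q.1 q.2) (y t) hH (hasFDerivAt_prodMk_right (𝕜 := ℝ) (x t) (y t))
  have hc := HasFDerivAt.comp_hasDerivAt t hH (hx.hasDerivAt.prodMk hy.hasDerivAt)
  refine hc.congr_deriv ?_
  rw [h1.fderiv, h2.fderiv]
  simp only [ContinuousLinearMap.comp_apply, ContinuousLinearMap.inl_apply,
    ContinuousLinearMap.inr_apply, ← map_add, Prod.mk_add_mk, add_zero, zero_add]


/-- Theorem 2 of the paper (environmentally robust CBFs with α(r) = ν r): if the robust
constraint with worst-case residual holds along the trajectory, the safe set `{h ≥ 0}`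
(defined through the true environment state) is forward invariant. -/
theorem er_cbf_forward_invariance (n p m : ℕ) (hn : 1 ≤ n) (hp : 1 ≤ p) (hm : 1 ≤ m)
    (ν : ℝ) (hν : 0 ≤ ν)
    (h : EuclideanSpace ℝ (Fin n) → EuclideanSpace ℝ (Fin p) → ℝ)
    (hdiff : Differentiable ℝ (fun q : EuclideanSpace ℝ (Fin n) × EuclideanSpace ℝ (Fin p) => h q.1 q.2))
    (f : EuclideanSpace ℝ (Fin n) → EuclideanSpace ℝ (Fin n))
    (g : EuclideanSpace ℝ (Fin n) → (EuclideanSpace ℝ (Fin m) →L[ℝ] EuclideanSpace ℝ (Fin n)))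
    (u : ℝ → EuclideanSpace ℝ (Fin m))
    (x : ℝ → EuclideanSpace ℝ (Fin n)) (hx : Differentiable ℝ x)
    (xs : ℝ → EuclideanSpace ℝ (Fin p)) (hxs : Differentiable ℝ xs)
    (xhs : ℝ → EuclideanSpace ℝ (Fin p)) (hxhs : Differentiable ℝ xhs)
    (hdyn : ∀ t, 0 ≤ t → deriv x t = f (x t) + g (x t) (u t))
    (εh εt εgrad : ℝ → ℝ) (hεgrad : ∀ t, 0 ≤ εgrad t)
    (herrh : ∀ t, 0 ≤ t → h (x t) (xs t) - h (x t) (xhs t) ≥ εh t)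
    (herrt : ∀ t, 0 ≤ t →
      fderiv ℝ (fun z => h (x t) z) (xs t) (deriv xs t)
        - fderiv ℝ (fun z => h (x t) z) (xhs t) (deriv xhs t) ≥ εt t)
    (herrgrad : ∀ t, 0 ≤ t →
      ‖fderiv ℝ (fun y => h y (xs t)) (x t) - fderiv ℝ (fun y => h y (xhs t)) (x t)‖ ≤ εgrad t)
    (hrob : ∀ t, 0 ≤ t →
      fderiv ℝ (fun z => h (x t) z) (xhs t) (deriv xhs t)
        + fderiv ℝ (fun y => h y (xhs t)) (x t) (f (x t) + g (x t) (u t))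
        + ν * h (x t) (xhs t)
        - εgrad t * ‖f (x t) + g (x t) (u t)‖ + εt t + ν * εh t ≥ 0)
    (h0 : h (x 0) (xs 0) ≥ 0) :
    ∀ t, 0 ≤ t → h (x t) (xs t) ≥ 0 := by
  intro t ht
  refine nonneg_of_deriv_add_mul_nonneg (r := fun s => h (x s) (xs s)) (ν := ν)
    (fun s => hasDerivAt_comp_two hdiff (hx s) (hxs s)) (fun s hs => ?_) h0 ht
  rw [hdyn s hs]
  set w := f (x s) + g (x s) (u s)
  -- the gradient error applied to `w` is at least `-εgrad * ‖w‖`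
  have hgrad := ((fderiv ℝ (fun y => h y (xs s)) (x s)
    - fderiv ℝ (fun y => h y (xhs s)) (x s)).le_of_opNorm_le (herrgrad s hs) w)
  rw [sub_apply, Real.norm_eq_abs] at hgrad
  have hgrad' := (abs_le.mp hgrad).1
  have hval := mul_le_mul_of_nonneg_left (herrh s hs) hν
  have htime := herrt s hs
  have hcon := hrob s hs
  linarith
end

section
/- Let n ≥ 1, let a, â, b, b̂ ∈ ℝ, let p, p̂ ∈ ℝⁿ and f_v, g_v ∈ ℝⁿ (Euclidean space), let ν ≥ 0, ε_∇ ≥ 0, ε_t, ε_h ∈ ℝ, and let u_nom, u_δ ∈ ℝ and ū ≥ 0 with |u_δ| ≤ ū. Set w = f_v + (u_nom + u_δ) • g_v. Assume the error bounds a − â ≥ ε_t, b − b̂ ≥ ε_h, and ‖p − p̂‖ ≤ ε_∇. If the input-independent robust constraint â + ⟨p̂, w⟩ + ν·b̂ − ε_∇·(‖f_v + u_nom • g_v‖ + ū·‖g_v‖) + ε_t + ν·ε_h ≥ 0 holds, then the true constraint a + ⟨p, w⟩ + ν·b ≥ 0 holds. -/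
/-!
The true constraint minus its estimate is `(a - ahat) + ⟪p - phat, w⟫ + ν * (b - bhat)`, where
`w = fv + (unom + uδ) • gv`. The outer terms are bounded below by `εt` and `ν * εh`; the middle one
by `-‖p - phat‖ * ‖w‖` (Cauchy–Schwarz), and the triangle inequality bounds `‖w‖` by
`‖fv + unom • gv‖ + ubar * ‖gv‖`.
-/

open scoped RealInnerProductSpace

/-- Pointwise content of Theorem 4: the input-independent robust constraint implies the
true CBF constraint for the robust scalar input `unom + uδ` with `|uδ| ≤ ubar`. -/
theorem input_independent_robust_constraint (n : ℕ) (hn : 1 ≤ n)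
    (a ahat b bhat : ℝ) (p phat fv gv : EuclideanSpace ℝ (Fin n))
    (ν : ℝ) (hν : 0 ≤ ν) (εgrad εt εh : ℝ) (hεgrad : 0 ≤ εgrad)
    (unom uδ ubar : ℝ) (hubar : 0 ≤ ubar) (huδ : |uδ| ≤ ubar)
    (ha : a - ahat ≥ εt) (hb : b - bhat ≥ εh) (hp : ‖p - phat‖ ≤ εgrad)
    (hrob : ahat + ⟪phat, fv + (unom + uδ) • gv⟫ + ν * bhat
        - εgrad * (‖fv + unom • gv‖ + ubar * ‖gv‖) + εt + ν * εh ≥ 0) :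
    a + ⟪p, fv + (unom + uδ) • gv⟫ + ν * b ≥ 0 := by
  set w := fv + (unom + uδ) • gv with hw
  -- The norm of the closed-loop vector is bounded independently of `uδ`.
  have hw_norm : ‖w‖ ≤ ‖fv + unom • gv‖ + ubar * ‖gv‖ := by
    calc ‖w‖ = ‖(fv + unom • gv) + uδ • gv‖ := by rw [hw, add_smul, add_assoc]
      _ ≤ ‖fv + unom • gv‖ + ‖uδ • gv‖ := norm_add_le _ _
      _ = ‖fv + unom • gv‖ + |uδ| * ‖gv‖ := by rw [norm_smul, Real.norm_eq_abs]
      _ ≤ ‖fv + unom • gv‖ + ubar * ‖gv‖ := by gcongr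
  have h_abs : |⟪p - phat, w⟫| ≤ εgrad * (‖fv + unom • gv‖ + ubar * ‖gv‖) :=
    (abs_real_inner_le_norm _ _).trans (mul_le_mul hp hw_norm (norm_nonneg _) hεgrad)
  have h_inner : ⟪p - phat, w⟫ = ⟪p, w⟫ - ⟪phat, w⟫ := inner_sub_left _ _ _
  have h_lower := (abs_le.mp h_abs).1
  have h_rate : ν * εh ≤ ν * (b - bhat) := mul_le_mul_of_nonneg_left hb hν
  linarith
end
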